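/- Let E ≠ {0} be a z-invariant linear subspace of Hol(𝔻) with T(E) ⊂ E such that I_E − λT|_E : E → E is bijective for every λ ∈ 𝔻, let M be a nontrivial linear subspace of E having the division property, and let π : E → E/M be the canonical surjection. Then for every λ ∈ 𝔻 there exists an onto linear map U_λ : E/M → E/M such that U_λ ∘ π ∘ (S|_E − λI_E) = π, the map I_{E/M} − (μ − λ)U_λ : E/M → E/M is a bijection for every μ ∈ 𝔻, and U_μ = U_λ ∘ (I_{E/M} − (μ − λ)U_λ)^{-1}. -/

import Mathlib

noncomputable section

open Metric Set Filter Topology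
open scoped Classical

/-- Functions holomorphic on the open unit disc, normalized to vanish outside it.
This is our model of `Hol(𝔻)`. -/
def HolDisc : Set (ℂ → ℂ) :=
  {f | DifferentiableOn ℂ f (Metric.ball (0:ℂ) 1) ∧ ∀ z ∉ Metric.ball (0:ℂ) 1, f z = 0}

/-- The constant function `1` of `Hol(𝔻)` (normalized to vanish outside the disc). -/
def oneD : ℂ → ℂ := fun z => if z ∈ Metric.ball (0:ℂ) 1 then 1 else 0

/-- The shift `S`, `(Sf)(z) = z f(z)`, as a linear map. -/
def shiftL : (ℂ → ℂ) →ₗ[ℂ] (ℂ → ℂ) where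
  toFun f := fun z => z * f z
  map_add' f g := by funext z; simp [mul_add]
  map_smul' c f := by funext z; simp [smul_eq_mul]; ring

/-- Division: `f_λ(z) = (f(z) - f(λ))/(z - λ)` for `z ≠ λ`, `f_λ(λ) = f'(λ)`,
normalized to vanish outside the disc.  `fdivB 0` is the backward shift `T`. -/
def fdivB (lam : ℂ) (f : ℂ → ℂ) : ℂ → ℂ := fun z =>
  if z ∈ Metric.ball (0:ℂ) 1 then
    (if z = lam then deriv f lam else (f z - f lam) / (z - lam))
  else 0

/-- The reflected model of the shift `S⁻` on `H₀(ℂ ∖ 𝔻̄)`: a function `h` on `{|ζ|>1}`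
vanishing at `∞` is represented by `k(w) = h(1/w)` (holomorphic on `𝔻`, `k 0 = 0`);
`S⁻` corresponds to `k ↦ (k(z) - k(0))/z - k'(0)·1`. -/
def negShiftF (k : ℂ → ℂ) : ℂ → ℂ := fun z => fdivB 0 k z - deriv k 0 * oneD z

/-- `n`-th Taylor coefficient at the origin. -/
def tCoeff (n : ℕ) (f : ℂ → ℂ) : ℂ := iteratedDeriv n f 0 / (Nat.factorial n)

/-!
For `f ∈ E` vanishing at `λ`, surjectivity of `I - λT` writes `f = g - λ T g`; evaluating at `λ`
gives `g 0 = 0`, so `g = S (T g)` and `f = (S - λ) (T g)`. Hence `E` has the division property.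
Some function of `M` does not vanish at `λ`, since otherwise division by `z - λ` could be repeated
indefinitely in `M`. Subtracting a multiple of it makes every class of `E / M` representable by a
function vanishing at `λ`, so `π ∘ (S - λ)` is onto. The division property of `M` says that its
kernel lies in `ker π`. So `π` factors through it, and the factor is `U_λ`. The resolvent identity
follows from `(I - (μ - λ) U_λ) ∘ π ∘ (S - λ) = π ∘ (S - μ)`.
-/

section RelativeResolvent

theorem exists_comp_eq_of_ker_le_ker {R V W X : Type*} [Ring R] [AddCommGroup V] [AddCommGroup W]
    [AddCommGroup X] [Module R V] [Module R W] [Module R X] {P : V →ₗ[R] W} {p : V →ₗ[R] X}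
    (hP : Function.Surjective P) (hker : LinearMap.ker P ≤ LinearMap.ker p) :
    ∃ U : W →ₗ[R] X, U ∘ₗ P = p := by
  refine ⟨(LinearMap.ker P).liftQ p hker ∘ₗ (P.quotKerEquivOfSurjective hP).symm, ?_⟩
  ext v
  have hv : (P.quotKerEquivOfSurjective hP).symm (P v) = (LinearMap.ker P).mkQ v :=
    (LinearEquiv.symm_apply_eq _).2 rfl
  simp [hv]

variable {R V W : Type*} [CommRing R] [AddCommGroup V] [AddCommGroup W] [Module R V] [Module R W]

/-- `U` is a resolvent at `a` of the endomorphism `S` relative to `π`, i.e. `U ∘ π ∘ (S - a) = π`.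
For the quotient map `π : E → E / M` and the shift `S` this is the defining property of `U_a`. -/
def IsRelResolvent (π : V →ₗ[R] W) (S : V →ₗ[R] V) (a : R) (U : W →ₗ[R] W) : Prop :=
  U ∘ₗ π ∘ₗ (S - a • LinearMap.id) = π

namespace IsRelResolvent

variable {π : V →ₗ[R] W} {S : V →ₗ[R] V} {a b : R} {U U' : W →ₗ[R] W}

theorem apply (hU : IsRelResolvent π S a U) (v : V) : U (π (S v - a • v)) = π v :=
  LinearMap.congr_fun hU v

theorem surjective (hU : IsRelResolvent π S a U) (hπ : Function.Surjective π) :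
    Function.Surjective U := fun w ↦
  let ⟨v, hv⟩ := hπ w
  ⟨π (S v - a • v), (hU.apply v).trans hv⟩

theorem id_sub_smul_apply (hU : IsRelResolvent π S a U) (b : R) (v : V) :
    (LinearMap.id - (b - a) • U : W →ₗ[R] W) (π (S v - a • v)) = π (S v - b • v) := by
  rw [LinearMap.sub_apply, LinearMap.smul_apply, hU.apply, LinearMap.id_apply, ← map_smul,
    ← map_sub]
  congr 1
  module

theorem comp_id_sub_smul (hU : IsRelResolvent π S a U) (hU' : IsRelResolvent π S b U')
    (ha : Function.Surjective (π ∘ₗ (S - a • LinearMap.id))) :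
    U' ∘ₗ (LinearMap.id - (b - a) • U) = U := by
  ext w
  obtain ⟨v, rfl⟩ := ha w
  exact (congrArg U' (hU.id_sub_smul_apply b v)).trans ((hU'.apply v).trans (hU.apply v).symm)

theorem bijective_id_sub_smul (hU : IsRelResolvent π S a U) (hU' : IsRelResolvent π S b U')
    (ha : Function.Surjective (π ∘ₗ (S - a • LinearMap.id)))
    (hb : Function.Surjective (π ∘ₗ (S - b • LinearMap.id))) :
    Function.Bijective (LinearMap.id - (b - a) • U : W →ₗ[R] W) := by
  constructor
  · rw [injective_iff_map_eq_zero]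
    intro w hw
    have hUw : U w = 0 := by
      rw [← hU.comp_id_sub_smul hU' ha, LinearMap.comp_apply, hw, map_zero]
    simpa [hUw] using hw
  · intro w
    obtain ⟨v, rfl⟩ := hb w
    exact ⟨π (S v - a • v), hU.id_sub_smul_apply b v⟩

end IsRelResolvent

end RelativeResolvent

section Division

variable {f : ℂ → ℂ} {lam z : ℂ}

theorem fdivB_eq_dslope (hz : z ∈ ball (0 : ℂ) 1) : fdivB lam f z = dslope f lam z := by
  rw [fdivB, if_pos hz]
  split_ifs with h
  · rw [h, dslope_same]
  · rw [dslope_of_ne f h, slope_def_field]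

theorem sub_mul_fdivB (hz : z ∈ ball (0 : ℂ) 1) : (z - lam) * fdivB lam f z = f z - f lam := by
  rw [fdivB_eq_dslope hz, ← smul_eq_mul, sub_smul_dslope]

theorem shiftL_sub_smul_apply (lam : ℂ) (f : ℂ → ℂ) (z : ℂ) :
    (shiftL f - lam • f) z = (z - lam) * f z :=
  (sub_mul z lam (f z)).symm

theorem shiftL_sub_smul_fdivB (hf : f ∈ HolDisc) (h0 : f lam = 0) :
    shiftL (fdivB lam f) - lam • fdivB lam f = f := by
  ext z
  rw [shiftL_sub_smul_apply]
  by_cases hz : z ∈ ball (0 : ℂ) 1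
  · rw [sub_mul_fdivB hz, h0, sub_zero]
  · rw [hf.2 z hz, fdivB, if_neg hz, mul_zero]

theorem fdivB_shiftL_sub_smul (hf : f ∈ HolDisc) (hlam : lam ∈ ball (0 : ℂ) 1) :
    fdivB lam (shiftL f - lam • f) = f := by
  ext z
  by_cases hz : z ∈ ball (0 : ℂ) 1
  · rw [fdivB_eq_dslope hz]
    rw [show shiftL f - lam • f = fun w ↦ (w - lam) • f w from
      funext (shiftL_sub_smul_apply lam f)]
    rcases eq_or_ne z lam with rfl | hne
    · have hf' := (hf.1.differentiableAt (isOpen_ball.mem_nhds hlam)).hasDerivAt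
      have hmul := ((hasDerivAt_id z).sub_const z).fun_smul hf'
      simpa using hmul.deriv
    · exact dslope_sub_smul_of_ne f hne
  · rw [hf.2 z hz, fdivB, if_neg hz]

/-- The division property at `lam` of a set of functions on the disc. -/
def HasDivisionAt (A : Set (ℂ → ℂ)) (lam : ℂ) : Prop :=
  ∀ f ∈ A, f lam = 0 → fdivB lam f ∈ A

theorem eq_zero_of_forall_eq_pow_mul (hf : f ∈ HolDisc) (hlam : lam ∈ ball (0 : ℂ) 1)
    (hpow : ∀ n : ℕ, ∃ g ∈ HolDisc, ∀ z, f z = (z - lam) ^ n * g z) : f = 0 := by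
  have analyticAt {g : ℂ → ℂ} (hg : g ∈ HolDisc) {w : ℂ} (hw : w ∈ ball (0 : ℂ) 1) :
      AnalyticAt ℂ g w := hg.1.analyticAt (isOpen_ball.mem_nhds hw)
  have order_eq_top : analyticOrderAt f lam = ⊤ := by
    rw [ENat.eq_top_iff_forall_ge]
    intro n
    obtain ⟨g, hg, hfg⟩ := hpow n
    exact (natCast_le_analyticOrderAt (analyticAt hf hlam)).2
      ⟨g, analyticAt hg hlam, Eventually.of_forall hfg⟩
  have eqOn_zero : EqOn f 0 (ball (0 : ℂ) 1) :=
    AnalyticOnNhd.eqOn_zero_of_preconnected_of_eventuallyEq_zero (fun _ ↦ analyticAt hf)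
      (convex_ball (0 : ℂ) 1).isPreconnected hlam (analyticOrderAt_eq_top.1 order_eq_top)
  ext z
  by_cases hz : z ∈ ball (0 : ℂ) 1
  · exact eqOn_zero hz
  · exact hf.2 z hz

namespace HasDivisionAt

variable {A : Set (ℂ → ℂ)}

theorem exists_eq_pow_mul (hA : HasDivisionAt A lam) (hhol : A ⊆ HolDisc)
    (hzero : ∀ g ∈ A, g lam = 0) (hf : f ∈ A) (n : ℕ) :
    ∃ g ∈ A, ∀ z, f z = (z - lam) ^ n * g z := by
  induction n with
  | zero => exact ⟨f, hf, fun z ↦ by simp⟩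
  | succ n ih =>
    obtain ⟨g, hg, hfg⟩ := ih
    refine ⟨fdivB lam g, hA g hg (hzero g hg), fun z ↦ ?_⟩
    have hgz : (z - lam) * fdivB lam g z = g z := by
      rw [← shiftL_sub_smul_apply, shiftL_sub_smul_fdivB (hhol hg) (hzero g hg)]
    rw [hfg z, pow_succ, mul_assoc, hgz]

theorem exists_apply_ne_zero (hA : HasDivisionAt A lam) (hhol : A ⊆ HolDisc)
    (hlam : lam ∈ ball (0 : ℂ) 1) (hf : f ∈ A) (hf0 : f ≠ 0) : ∃ g ∈ A, g lam ≠ 0 := by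
  by_contra! hzero
  refine hf0 (eq_zero_of_forall_eq_pow_mul (hhol hf) hlam fun n ↦ ?_)
  obtain ⟨g, hg, hfg⟩ := hA.exists_eq_pow_mul hhol hzero hf n
  exact ⟨g, hhol hg, hfg⟩

theorem of_forall_exists_sub_smul_fdivB_zero (hhol : A ⊆ HolDisc) (hlam : lam ∈ ball (0 : ℂ) 1)
    (hT : ∀ g ∈ A, fdivB 0 g ∈ A) (hsurj : ∀ f ∈ A, ∃ g ∈ A, g - lam • fdivB 0 g = f) :
    HasDivisionAt A lam := by
  intro f hf hf0
  obtain ⟨g, hg, rfl⟩ := hsurj f hf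
  have hg0 : g 0 = 0 := by
    have hT_lam : (lam - 0) * fdivB 0 g lam = g lam - g 0 := sub_mul_fdivB hlam
    have hg_lam : g lam - lam * fdivB 0 g lam = 0 := hf0
    linear_combination hg_lam + hT_lam
  have hST : shiftL (fdivB 0 g) = g := by
    simpa using shiftL_sub_smul_fdivB (hhol hg) hg0
  have hdiv : fdivB lam (g - lam • fdivB 0 g) = fdivB 0 g := by
    simpa only [hST] using fdivB_shiftL_sub_smul (hhol (hT g hg)) hlam
  rw [hdiv]
  exact hT g hg

end HasDivisionAt

end Division

section Quotient

variable {E M : Submodule ℂ (ℂ → ℂ)} {lam : ℂ}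

theorem surjective_mkQ_comp_shiftL_sub_smul (hEhol : (E : Set (ℂ → ℂ)) ⊆ HolDisc)
    (hES : ∀ f ∈ E, shiftL f ∈ E) (hE : HasDivisionAt E lam)
    {h : ℂ → ℂ} (hhM : h ∈ M) (hhE : h ∈ E) (hh : h lam ≠ 0) :
    Function.Surjective
      ((M.comap E.subtype).mkQ ∘ₗ (shiftL.restrict hES - lam • LinearMap.id)) := by
  intro q
  obtain ⟨f, rfl⟩ := (M.comap E.subtype).mkQ_surjective q
  let c : ℂ := f.1 lam / h lam
  let g : E := f - c • ⟨h, hhE⟩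
  have hg0 : g.1 lam = 0 := by
    change f.1 lam - f.1 lam / h lam * h lam = 0
    rw [div_mul_cancel₀ _ hh, sub_self]
  let k : E := ⟨fdivB lam g, hE g g.2 hg0⟩
  have hk : (shiftL.restrict hES - lam • LinearMap.id : E →ₗ[ℂ] E) k = g :=
    Subtype.ext (shiftL_sub_smul_fdivB (hEhol g.2) hg0)
  refine ⟨k, ?_⟩
  rw [LinearMap.comp_apply, hk]
  refine (Submodule.Quotient.eq _).2 ?_
  have hgf : g - f = -(c • ⟨h, hhE⟩) := by simp [g]
  exact hgf ▸ neg_mem (Submodule.smul_mem _ c hhM)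

theorem ker_mkQ_comp_shiftL_sub_smul_le (hEhol : (E : Set (ℂ → ℂ)) ⊆ HolDisc)
    (hES : ∀ f ∈ E, shiftL f ∈ E) (hM : HasDivisionAt M lam) (hlam : lam ∈ ball (0 : ℂ) 1) :
    LinearMap.ker ((M.comap E.subtype).mkQ ∘ₗ (shiftL.restrict hES - lam • LinearMap.id)) ≤
      LinearMap.ker (M.comap E.subtype).mkQ := by
  rw [LinearMap.ker_comp, Submodule.ker_mkQ]
  intro f hf
  have hfM : shiftL f - lam • (f : ℂ → ℂ) ∈ M := hf
  have hdiv : fdivB lam (shiftL f - lam • (f : ℂ → ℂ)) ∈ M :=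
    hM _ hfM (by rw [shiftL_sub_smul_apply, sub_self, zero_mul])
  rwa [fdivB_shiftL_sub_smul (hEhol f.2) hlam] at hdiv

end Quotient

/-- (Corollary 2.6) -/
theorem statement5
    (E M : Submodule ℂ (ℂ → ℂ))
    (hEhol : (E : Set (ℂ → ℂ)) ⊆ HolDisc) (hE0 : E ≠ ⊥)
    (hES : ∀ f ∈ E, shiftL f ∈ E)
    (TE : ↥E →ₗ[ℂ] ↥E) (hTE : ∀ f : ↥E, (↑(TE f) : ℂ → ℂ) = fdivB 0 ↑f)
    (hbij : ∀ μ ∈ Metric.ball (0:ℂ) 1,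
      Function.Bijective ((LinearMap.id : ↥E →ₗ[ℂ] ↥E) - μ • TE))
    (hME : M ≤ E) (hM0 : M ≠ ⊥) (hMne : M ≠ E)
    -- M has the division property
    (hdiv : ∀ lam ∈ Metric.ball (0:ℂ) 1, ∀ f ∈ M, f lam = 0 → fdivB lam f ∈ M) :
    ∀ lam ∈ Metric.ball (0:ℂ) 1,
      ∃ U : (↥E ⧸ M.comap E.subtype) →ₗ[ℂ] (↥E ⧸ M.comap E.subtype),
        Function.Surjective U
        ∧ (∀ f : ↥E,
            U ((M.comap E.subtype).mkQ (shiftL.restrict hES f - lam • f)) =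
              (M.comap E.subtype).mkQ f)
        ∧ ∀ mu ∈ Metric.ball (0:ℂ) 1,
            Function.Bijective
              ⇑((LinearMap.id : (↥E ⧸ M.comap E.subtype) →ₗ[ℂ] (↥E ⧸ M.comap E.subtype))
                  - (mu - lam) • U)
            ∧ ∃ Umu : (↥E ⧸ M.comap E.subtype) →ₗ[ℂ] (↥E ⧸ M.comap E.subtype),
                (∀ f : ↥E,
                  Umu ((M.comap E.subtype).mkQ (shiftL.restrict hES f - mu • f)) =
                    (M.comap E.subtype).mkQ f)
                ∧ Umu ∘ₗ ((LinearMap.id : (↥E ⧸ M.comap E.subtype) →ₗ[ℂ]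
                    (↥E ⧸ M.comap E.subtype)) - (mu - lam) • U) = U := by
  have hE_div (l : ℂ) (hl : l ∈ ball (0 : ℂ) 1) : HasDivisionAt E l := by
    refine .of_forall_exists_sub_smul_fdivB_zero hEhol hl
      (fun g hg ↦ hTE ⟨g, hg⟩ ▸ (TE ⟨g, hg⟩).2) fun f hf ↦ ?_
    obtain ⟨g, hg⟩ := (hbij l hl).surjective ⟨f, hf⟩
    exact ⟨g, g.2, hTE g ▸ congrArg Subtype.val hg⟩
  have hsurj (l : ℂ) (hl : l ∈ ball (0 : ℂ) 1) : Function.Surjective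
      ((M.comap E.subtype).mkQ ∘ₗ (shiftL.restrict hES - l • LinearMap.id)) := by
    obtain ⟨f, hfM, hf0⟩ := M.ne_bot_iff.1 hM0
    obtain ⟨h, hhM, hh⟩ := HasDivisionAt.exists_apply_ne_zero (hdiv l hl)
      (fun _ hg ↦ hEhol (hME hg)) hl hfM hf0
    exact surjective_mkQ_comp_shiftL_sub_smul hEhol hES (hE_div l hl) hhM (hME hhM) hh
  have hres (l : ℂ) (hl : l ∈ ball (0 : ℂ) 1) :
      ∃ U, IsRelResolvent (M.comap E.subtype).mkQ (shiftL.restrict hES) l U :=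
    exists_comp_eq_of_ker_le_ker (hsurj l hl)
      (ker_mkQ_comp_shiftL_sub_smul_le hEhol hES (hdiv l hl) hl)
  intro lam hlam
  obtain ⟨U, hU⟩ := hres lam hlam
  refine ⟨U, hU.surjective (Submodule.mkQ_surjective _), hU.apply, fun mu hmu ↦ ?_⟩
  obtain ⟨Umu, hUmu⟩ := hres mu hmu
  exact ⟨hU.bijective_id_sub_smul hUmu (hsurj lam hlam) (hsurj mu hmu),
    Umu, hUmu.apply, hU.comp_id_sub_smul hUmu (hsurj lam hlam)⟩
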